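/- Let D be an integral domain and ⋆ a semistar operation on D. Then D is a ⋆-Dedekind domain if and only if for each nonzero ideal I of D there exist a finite family of quasi-⋆_f-prime ideals P_1, …, P_n of D that are pairwise ⋆_f-comaximal and nonnegative integers e_1, …, e_n such that I^⋆̃ = (P_1^{e_1} P_2^{e_2} ⋯ P_n^{e_n})^⋆̃. Moreover, in this case, if I^⋆̃ ≠ D^⋆̃ one may take P_i^⋆̃ ≠ D^⋆̃ for all i, all exponents e_i positive, and then the factorization is unique. -/

import Mathlib

open scoped Pointwise

section SemistarDefs

variable {D : Type*} [CommRing D] [IsDomain D]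
variable {K : Type*} [Field K] [Algebra D K] [IsFractionRing D K]

/-- `star` is a semistar operation on the integral domain `D` with quotient field `K`:
a map on (nonzero) `D`-submodules of `K` satisfying `(xE)^⋆ = x·E^⋆`, monotonicity,
extensivity and idempotence. -/
structure IsSemistarOperation (star : Submodule D K → Submodule D K) : Prop where
  ne_bot : ∀ {E : Submodule D K}, E ≠ ⊥ → star E ≠ ⊥
  map_smul : ∀ (x : K), x ≠ 0 → ∀ {E : Submodule D K}, E ≠ ⊥ →
    star (Submodule.map (LinearMap.mulLeft D x) E) = Submodule.map (LinearMap.mulLeft D x) (star E)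
  mono : ∀ {E F : Submodule D K}, E ≠ ⊥ → F ≠ ⊥ → E ≤ F → star E ≤ star F
  le_star : ∀ {E : Submodule D K}, E ≠ ⊥ → E ≤ star E
  star_star : ∀ {E : Submodule D K}, E ≠ ⊥ → star (star E) = star E

/-- The image in `K` of an ideal `I` of `D`, as a `D`-submodule of `K`. -/
def idealExt (K : Type*) [Field K] [Algebra D K] (I : Ideal D) : Submodule D K :=
  Submodule.map (Algebra.linearMap D K) I

/-- `I` is a quasi-⋆-ideal: a nonzero ideal of `D` with `I = I^⋆ ∩ D`. -/
def QuasiStarIdeal (star : Submodule D K → Submodule D K) (I : Ideal D) : Prop :=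
  I ≠ ⊥ ∧ Submodule.comap (Algebra.linearMap D K) (star (idealExt K I)) = I

/-- `P` is a quasi-⋆-prime: a prime ideal which is a quasi-⋆-ideal. -/
def QuasiStarPrime (star : Submodule D K → Submodule D K) (P : Ideal D) : Prop :=
  P.IsPrime ∧ QuasiStarIdeal star P

/-- `M` is a quasi-⋆-maximal ideal: maximal in the set of proper quasi-⋆-ideals of `D`. -/
def QuasiStarMaximal (star : Submodule D K → Submodule D K) (M : Ideal D) : Prop :=
  QuasiStarIdeal star M ∧ M ≠ ⊤ ∧
    ∀ J : Ideal D, QuasiStarIdeal star J → J ≠ ⊤ → M ≤ J → J = M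

/-- The finite-type semistar operation `⋆_f` associated to `⋆`:
`E^{⋆_f} = ⋃ { F^⋆ : F nonzero finitely generated, F ⊆ E }`. -/
def finTypeOp (star : Submodule D K → Submodule D K) : Submodule D K → Submodule D K :=
  fun E => ⨆ (F : Submodule D K) (_ : F ≠ ⊥) (_ : F.FG) (_ : F ≤ E), star F

/-- The extension `E·D_Q` of a `D`-submodule `E` of `K` to the localization of `D` at
(the complement of) `Q`, described as `{ x ∈ K : s·x ∈ E for some s ∉ Q }`. -/
def extendToPrime (Q : Ideal D) (E : Submodule D K) : Submodule D K :=
  Submodule.span D {x : K | ∃ s : D, s ∉ Q ∧ algebraMap D K s * x ∈ E}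

/-- The stable semistar operation of finite type `⋆̃` associated to `⋆`:
`E^⋆̃ = ⋂ { E·D_Q : Q a quasi-⋆_f-maximal ideal of D }`. -/
def stableOp (star : Submodule D K → Submodule D K) : Submodule D K → Submodule D K :=
  fun E => ⨅ (Q : Ideal D) (_ : QuasiStarMaximal (finTypeOp star) Q), extendToPrime Q E

/-- A rank-one discrete valuation ring: a (domain which is a) local PID which is not a field. -/
def IsDVR (R : Type*) [CommRing R] : Prop :=
  ∃ h : IsDomain R, @IsDiscreteValuationRing R _ h

/-- A valuation domain. -/
def IsValuationDomain (R : Type*) [CommRing R] : Prop :=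
  ∃ h : IsDomain R, @ValuationRing R _ h

/-- `D` is a ⋆-almost Dedekind domain: `D_M` is a rank-one discrete valuation ring for
every quasi-⋆_f-maximal ideal `M` of `D`. -/
def StarADD (star : Submodule D K → Submodule D K) : Prop :=
  ∀ (M : Ideal D) [M.IsPrime], QuasiStarMaximal (finTypeOp star) M →
    IsDVR (Localization.AtPrime M)

/-- `D` is a Prüfer ⋆-multiplication domain: `D_M` is a valuation domain for every
quasi-⋆_f-maximal ideal `M` of `D`. -/
def StarPMD (star : Submodule D K → Submodule D K) : Prop :=
  ∀ (M : Ideal D) [M.IsPrime], QuasiStarMaximal (finTypeOp star) M →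
    IsValuationDomain (Localization.AtPrime M)

/-- `D` is ⋆-Noetherian: ascending chain condition on quasi-⋆-ideals. -/
def StarNoetherian (star : Submodule D K → Submodule D K) : Prop :=
  ∀ c : ℕ →o Ideal D, (∀ n, QuasiStarIdeal star (c n)) → ∃ n, ∀ m, n ≤ m → c m = c n

/-- `D` is a ⋆-Dedekind domain: ⋆-Noetherian and a P⋆MD. -/
def StarDedekind (star : Submodule D K → Submodule D K) : Prop :=
  StarNoetherian star ∧ StarPMD star

/-- `D` has the ⋆_f-finite character property: every nonzero element of `D` lies in only
finitely many quasi-⋆_f-maximal ideals. -/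
def StarFiniteCharacter (star : Submodule D K → Submodule D K) : Prop :=
  ∀ d : D, d ≠ 0 → {M : Ideal D | QuasiStarMaximal (finTypeOp star) M ∧ d ∈ M}.Finite

/-- The `v`-operation `E ↦ (D : (D : E))`. -/
def vOp : Submodule D K → Submodule D K := fun E => 1 / (1 / E)

/-- A nonzero `D`-submodule `E` of `K` is quasi-∗-invertible if `(E·(D^∗ : E))^∗ = D^∗`. -/
def QuasiStarInvertible (star : Submodule D K → Submodule D K) (E : Submodule D K) : Prop :=
  star (E * (star 1 / E)) = star (1 : Submodule D K)

/-- `D` has the ∗-cancellation law: for nonzero fractional ideals `A`, `B`, `C`,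
`(AB)^∗ = (AC)^∗` implies `B^∗ = C^∗`. -/
def StarCancellation (star : Submodule D K → Submodule D K) : Prop :=
  ∀ A B C : Submodule D K, A ≠ ⊥ → B ≠ ⊥ → C ≠ ⊥ →
    IsFractional (nonZeroDivisors D) A → IsFractional (nonZeroDivisors D) B →
    IsFractional (nonZeroDivisors D) C →
    star (A * B) = star (A * C) → star B = star C

/-- The ∗-dimension of `D`: the supremum of the lengths of chains of quasi-∗-prime ideals
of `D` (between `(0)` and a quasi-∗-prime). -/
noncomputable def starDim (star : Submodule D K → Submodule D K) : ℕ∞ :=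
  ⨆ (k : ℕ) (_ : ∃ c : Fin k → Ideal D, StrictMono c ∧ ∀ i, QuasiStarPrime star (c i)),
    (k : ℕ∞)

/-- A submodule `T` of `K` (containing the image of an integral domain with quotient
field `K`) is integrally closed (in `K`) if every `x ∈ K` satisfying a monic polynomial
equation with coefficients in `T` belongs to `T`. -/
def IntegrallyClosedSub (T : Submodule D K) : Prop :=
  ∀ x : K, (∃ (n : ℕ) (c : Fin n → K), (∀ i, c i ∈ T) ∧
    x ^ n = ∑ i : Fin n, c i * x ^ (i : ℕ)) → x ∈ T

/-- The content ideal `c(p)` of a polynomial: the ideal generated by its coefficients. -/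
def contentIdeal (p : Polynomial D) : Ideal D := Ideal.span (Set.range p.coeff)

/-- The multiplicative set `N(⋆) = { h ∈ D[X] : h ≠ 0, c(h)^⋆ = D^⋆ }` (as a submonoid,
via the closure of this multiplicatively closed set). -/
noncomputable def nagataMonoid (star : Submodule D K → Submodule D K) : Submonoid (Polynomial D) :=
  Submonoid.closure
    {p : Polynomial D | p ≠ 0 ∧ star (idealExt K (contentIdeal p)) = star (1 : Submodule D K)}

/-- The Nagata ring `Na(D,⋆) = D[X]_{N(⋆)}`. -/
abbrev NagataRing (star : Submodule D K → Submodule D K) :=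
  Localization (nagataMonoid star)

/-- `V` is a valuation overring of `D` (inside the quotient field `K`): `D ⊆ V ⊆ K` and
for every nonzero `x ∈ K`, `x ∈ V` or `x⁻¹ ∈ V`. -/
def IsValuationOverring (D : Type*) [CommRing D] {K : Type*} [Field K] [Algebra D K]
    (V : Subring K) : Prop :=
  (∀ d : D, algebraMap D K d ∈ V) ∧ ∀ x : K, x ≠ 0 → (x ∈ V ∨ x⁻¹ ∈ V)

/-- `V` is a ∗-valuation overring of `D`: a valuation overring such that `F^∗ ⊆ FV` for
every nonzero finitely generated `D`-submodule `F` of `K`. -/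
def IsStarValuationOverring (star : Submodule D K → Submodule D K) (V : Subring K) : Prop :=
  IsValuationOverring D V ∧
    ∀ F : Submodule D K, F ≠ ⊥ → F.FG →
      star F ≤ Submodule.span D ((F : Set K) * (V : Set K))

/-- `D` is a Krull domain: there is a family of rank-one discrete valuation overrings of `D`
with quotient field `K` whose intersection is `D`, with finite character. -/
def IsKrullDomain (D : Type*) [CommRing D] (K : Type*) [Field K] [Algebra D K] : Prop :=
  ∃ 𝒱 : Set (Subring K),
    (∀ V ∈ 𝒱, (∀ d : D, algebraMap D K d ∈ V) ∧ IsDVR V ∧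
      ∀ x : K, ∃ a ∈ V, ∃ b ∈ V, b ≠ 0 ∧ x * b = a) ∧
    (⋂ V ∈ 𝒱, (V : Set K)) = Set.range (algebraMap D K) ∧
    ∀ d : D, d ≠ 0 → {V ∈ 𝒱 | ¬ ∃ y ∈ V, algebraMap D K d * y = 1}.Finite

end SemistarDefs

/-!
Both sides are equivalent to the local condition "`D_M` is a discrete valuation ring for every
quasi-⋆_f-maximal `M`, and every nonzero element lies in only finitely many such `M`", because
`I^⋆̃` and `J^⋆̃` agree exactly when `I·D_M = J·D_M` for all these `M`.

If `D` is ⋆-Dedekind, every ideal `I` contains a finitely generated `F` with `I ⊆ F^⋆`. As `D_M` is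
a valuation ring, `F·D_M` is generated by some `a ∈ F`, and passing from `F` to `F^⋆ ∩ D` does not
enlarge it; hence `D_M` is Noetherian, so a discrete valuation ring. Finite character follows by
Noetherian induction on quasi-⋆-ideals. Conversely, the stages of an ascending chain of
quasi-⋆-ideals differ only at the finitely many `M` containing the first one, and the chain
stabilizes in each of these `D_M`.

If ideals factor, at most one of several comaximal factors survives in `D_M`, so every nonzero ideal
of `D_M` is a prime power, which already forces `D_M` to be a discrete valuation ring; and the
quasi-⋆_f-maximal ideals containing `d` occur among the factors of `(d)`. Conversely, `I` factors
as the product over all `M ⊇ I` of `M ^ e_M`, where `I·D_M = (M·D_M) ^ e_M`, and these local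
exponents determine the factorization.
-/

section PrimePowerIdeals

/-- Every nonzero ideal of `R` is a power of a prime ideal. This is what the factorization property
of a domain becomes after localizing at a quasi-⋆_f-maximal ideal, since that ideal contains
at most one of several pairwise ⋆_f-comaximal factors. -/
def NonzeroIdealsArePrimePowers (R : Type*) [CommRing R] : Prop :=
  ∀ I : Ideal R, I ≠ ⊥ → ∃ (P : Ideal R) (e : ℕ), P.IsPrime ∧ I = P ^ e

namespace NonzeroIdealsArePrimePowers

variable {R : Type*} [CommRing R]

theorem isPrime_of_not_le_sq (h : NonzeroIdealsArePrimePowers R) {I Q : Ideal R}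
    (hQ : Q.IsPrime) (hIQ : I ≤ Q) (hI : ¬ I ≤ Q ^ 2) : I.IsPrime := by
  obtain ⟨P, e, hP, rfl⟩ := h I (by rintro rfl; exact hI bot_le)
  have hPQ : P ≤ Q := hQ.le_of_pow_le hIQ
  match e with
  | 0 => exact absurd (top_le_iff.1 (by simpa using hIQ)) hQ.ne_top
  | 1 => rwa [pow_one]
  | e + 2 =>
    exact absurd ((Ideal.pow_le_pow_right (by omega)).trans (Ideal.pow_right_mono hPQ 2)) hI

theorem eq_span_singleton (h : NonzeroIdealsArePrimePowers R) {Q : Ideal R} (hQ : Q.IsPrime)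
    {x : R} (hx : x ∈ Q) (hx2 : x ∉ Q ^ 2) : Q = Ideal.span {x} := by
  have hprime : (Ideal.span {x}).IsPrime :=
    h.isPrime_of_not_le_sq hQ ((Ideal.span_singleton_le_iff_mem _).2 hx)
      fun hle => hx2 (hle (Ideal.mem_span_singleton_self x))
  refine le_antisymm (fun y hy => ?_) ((Ideal.span_singleton_le_iff_mem _).2 hx)
  have hprime' : (Ideal.span {x, y ^ 2}).IsPrime :=
    h.isPrime_of_not_le_sq hQ
      (Ideal.span_le.2 (Set.pair_subset hx (Ideal.pow_mem_of_mem _ hy 2 two_pos)))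
      fun hle => hx2 (hle (Ideal.subset_span (by simp)))
  have hy' : y ∈ Ideal.span {x, y ^ 2} :=
    hprime'.mem_of_pow_mem 2 (Ideal.subset_span (by simp))
  obtain ⟨a, b, hab⟩ := Ideal.mem_span_pair.1 hy'
  have hmul : y * (1 - b * y) ∈ Ideal.span {x} :=
    Ideal.mem_span_singleton'.2 ⟨a, by linear_combination hab⟩
  refine (hprime.mem_or_mem hmul).resolve_right fun hb => hQ.ne_top ((Ideal.eq_top_iff_one _).2 ?_)
  have hbQ : 1 - b * y ∈ Q := (Ideal.span_singleton_le_iff_mem _).2 hx hb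
  simpa using Q.add_mem hbQ (Q.mul_mem_left b hy)

variable [IsDomain R]

theorem exists_eq_span_singleton_pow (h : NonzeroIdealsArePrimePowers R) {I : Ideal R}
    (hfg : I.FG) (hbot : I ≠ ⊥) (htop : I ≠ ⊤) :
    ∃ (p : R) (k : ℕ), Prime p ∧ k ≠ 0 ∧ I = Ideal.span {p ^ k} := by
  obtain ⟨P, k, hP, rfl⟩ := h I hbot
  have hk : k ≠ 0 := by rintro rfl; simp at htop
  have hlt : ¬ P ≤ P ^ 2 := fun hle => by
    have hidem : IsIdempotentElem P :=
      le_antisymm Ideal.mul_le_left (by rwa [← pow_two])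
    exact ((Ideal.isIdempotentElem_iff_eq_bot_or_top _ hfg).1 (hidem.pow k)).elim hbot htop
  obtain ⟨p, hp, hp2⟩ := SetLike.not_le_iff_exists.1 hlt
  obtain rfl := h.eq_span_singleton hP hp hp2
  have hp0 : p ≠ 0 := by rintro rfl; exact hp2 (zero_mem _)
  exact ⟨p, k, (Ideal.span_singleton_prime hp0).1 hP, hk, Ideal.span_singleton_pow p k⟩

variable [IsLocalRing R]

theorem associated_of_prime (h : NonzeroIdealsArePrimePowers R) {p q : R} (hp : Prime p)
    (hq : Prime q) : Associated p q := by
  have hle : Ideal.span {p, q} ≤ IsLocalRing.maximalIdeal R :=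
    Ideal.span_le.2 (Set.pair_subset hp.not_isUnit hq.not_isUnit)
  have hpmem : p ∈ Ideal.span {p, q} := Ideal.subset_span (by simp)
  have hqmem : q ∈ Ideal.span {p, q} := Ideal.subset_span (by simp)
  obtain ⟨r, k, hr, hk, hrk⟩ := h.exists_eq_span_singleton_pow
    (Submodule.fg_span (Set.toFinite {p, q}))
    (fun hbot => hp.ne_zero (by simpa [hbot] using hpmem))
    (ne_top_of_le_ne_top Ideal.IsPrime.ne_top' hle)
  have hdvd : ∀ {x}, x ∈ Ideal.span {p, q} → r ∣ x := fun hx =>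
    (dvd_pow_self r hk).trans (Ideal.mem_span_singleton.1 (hrk ▸ hx))
  exact ((hr.dvd_prime_iff_associated hp).1 (hdvd hpmem)).symm.trans
    ((hr.dvd_prime_iff_associated hq).1 (hdvd hqmem))

theorem isDiscreteValuationRing (h : NonzeroIdealsArePrimePowers R) (hR : ¬ IsField R) :
    IsDiscreteValuationRing R := by
  have hpow : ∀ x : R, x ≠ 0 → ¬ IsUnit x → ∃ (p : R) (k : ℕ), Prime p ∧ Associated (p ^ k) x := by
    intro x hx0 hx
    obtain ⟨p, k, hp, -, hpk⟩ := h.exists_eq_span_singleton_pow (Submodule.fg_span_singleton x)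
      (by simpa using hx0) (by rwa [Ne, Ideal.span_singleton_eq_top])
    exact ⟨p, k, hp, (Ideal.span_singleton_eq_span_singleton.1 hpk).symm⟩
  obtain ⟨a, ha0, ha⟩ := Ring.exists_not_isUnit_of_not_isField hR
  obtain ⟨p, -, hp, -⟩ := hpow a ha0 ha
  refine IsDiscreteValuationRing.ofHasUnitMulPowIrreducibleFactorization
    ⟨p, hp.irreducible, fun {x} hx0 => ?_⟩
  by_cases hx : IsUnit x
  · exact ⟨0, by simpa [Associated.comm, associated_one_iff_isUnit] using hx⟩
  · obtain ⟨q, k, hq, hqk⟩ := hpow x hx0 hx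
    exact ⟨k, ((h.associated_of_prime hp hq).pow_pow).trans hqk⟩

end NonzeroIdealsArePrimePowers

end PrimePowerIdeals

section QuasiClosure

variable {D K : Type*} [CommRing D] [Field K] [Algebra D K]

theorem idealExt_mono {I J : Ideal D} (hIJ : I ≤ J) : idealExt K I ≤ idealExt K J :=
  Submodule.map_mono hIJ

theorem idealExt_top : idealExt K (⊤ : Ideal D) = 1 := by
  rw [idealExt, Submodule.one_eq_range, Submodule.map_top]

theorem idealExt_span_singleton_mul (a : D) (I : Ideal D) :
    idealExt K (Ideal.span {a} * I) =
      (idealExt K I).map (LinearMap.mulLeft D (algebraMap D K a)) := by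
  ext x
  simp [idealExt, Ideal.mem_span_singleton_mul]

theorem algebraMap_mem_idealExt [IsFractionRing D K] {I : Ideal D} {x : D} :
    algebraMap D K x ∈ idealExt K I ↔ x ∈ I :=
  (IsFractionRing.injective D K).mem_set_image

theorem idealExt_ne_bot [IsFractionRing D K] {I : Ideal D} (hI : I ≠ ⊥) : idealExt K I ≠ ⊥ := by
  rw [idealExt, ← Submodule.map_bot (Algebra.linearMap D K)]
  exact (Submodule.map_injective_of_injective (IsFractionRing.injective D K)).ne hI

theorem idealExt_fg {I : Ideal D} (hI : I.FG) : (idealExt K I).FG :=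
  Submodule.FG.map _ hI

/-- The trace `I^⋆ ∩ D` on `D` of the closure of an ideal `I`, so that the quasi-⋆-ideals are the
nonzero ideals equal to their quasi-closure. -/
def quasiClosure (star : Submodule D K → Submodule D K) (I : Ideal D) : Ideal D :=
  (star (idealExt K I)).comap (Algebra.linearMap D K)

variable {star : Submodule D K → Submodule D K} {I J : Ideal D}

theorem mem_quasiClosure {x : D} :
    x ∈ quasiClosure star I ↔ algebraMap D K x ∈ star (idealExt K I) :=
  Iff.rfl

theorem QuasiStarIdeal.quasiClosure_eq (hI : QuasiStarIdeal star I) : quasiClosure star I = I :=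
  hI.2

namespace IsSemistarOperation

variable [IsFractionRing D K] (hstar : IsSemistarOperation star)

include hstar

theorem le_quasiClosure (hI : I ≠ ⊥) : I ≤ quasiClosure star I := fun _ hx =>
  hstar.le_star (idealExt_ne_bot hI) (algebraMap_mem_idealExt.2 hx)

theorem quasiClosure_ne_bot (hI : I ≠ ⊥) : quasiClosure star I ≠ ⊥ :=
  ne_bot_of_le_ne_bot hI (hstar.le_quasiClosure hI)

theorem quasiClosure_mono (hI : I ≠ ⊥) (hIJ : I ≤ J) : quasiClosure star I ≤ quasiClosure star J :=
  Submodule.comap_mono (hstar.mono (idealExt_ne_bot hI)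
    (idealExt_ne_bot (ne_bot_of_le_ne_bot hI hIJ)) (idealExt_mono hIJ))

theorem quasiClosure_le_of_le (hI : I ≠ ⊥) (hJ : J ≠ ⊥) (hIJ : I ≤ quasiClosure star J) :
    quasiClosure star I ≤ quasiClosure star J := by
  refine Submodule.comap_mono ?_
  rw [← hstar.star_star (idealExt_ne_bot hJ)]
  exact hstar.mono (idealExt_ne_bot hI) (hstar.ne_bot (idealExt_ne_bot hJ))
    (Submodule.map_le_iff_le_comap.2 hIJ)

theorem quasiStarIdeal_quasiClosure (hI : I ≠ ⊥) : QuasiStarIdeal star (quasiClosure star I) :=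
  ⟨hstar.quasiClosure_ne_bot hI,
    (hstar.quasiClosure_le_of_le (hstar.quasiClosure_ne_bot hI) hI le_rfl).antisymm
      (hstar.le_quasiClosure (hstar.quasiClosure_ne_bot hI))⟩

theorem mul_mem_quasiClosure_iff (hI : I ≠ ⊥) {a x : D} (ha : a ≠ 0) :
    a * x ∈ quasiClosure star (Ideal.span {a} * I) ↔ x ∈ quasiClosure star I := by
  have ha' : algebraMap D K a ≠ 0 := by simpa using ha
  rw [mem_quasiClosure, idealExt_span_singleton_mul, hstar.map_smul _ ha' (idealExt_ne_bot hI),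
    map_mul]
  exact (mul_right_injective₀ ha').mem_set_image

theorem quasiClosure_eq_top_iff (hI : I ≠ ⊥) :
    quasiClosure star I = ⊤ ↔ star (idealExt K I) = star 1 := by
  have : Nontrivial D := (algebraMap D K).domain_nontrivial
  have hI' := idealExt_ne_bot (K := K) hI
  have h1 : (1 : Submodule D K) ≠ ⊥ := idealExt_top (D := D) (K := K) ▸ idealExt_ne_bot top_ne_bot
  rw [eq_top_iff, quasiClosure, ← Submodule.map_le_iff_le_comap, ← idealExt, idealExt_top]
  refine ⟨fun hle => le_antisymm ?_ ?_, fun heq => heq ▸ hstar.le_star h1⟩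
  · exact hstar.mono hI' h1 (idealExt_top (D := D) (K := K) ▸ idealExt_mono le_top)
  · exact (hstar.mono h1 (hstar.ne_bot hI') hle).trans_eq (hstar.star_star hI')

end IsSemistarOperation

end QuasiClosure

section FiniteType

variable {D K : Type*} [CommRing D] [Field K] [Algebra D K]
variable {star : Submodule D K → Submodule D K}

theorem star_le_finTypeOp {E F : Submodule D K} (hF : F ≠ ⊥) (hFfg : F.FG) (hFE : F ≤ E) :
    star F ≤ finTypeOp star E :=
  le_iSup₂_of_le F hF (le_iSup₂_of_le hFfg hFE le_rfl)

theorem quasiClosure_le_quasiClosure_finTypeOp [IsFractionRing D K] {I J : Ideal D} (hJ : J ≠ ⊥)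
    (hJfg : J.FG) (hJI : J ≤ I) : quasiClosure star J ≤ quasiClosure (finTypeOp star) I :=
  Submodule.comap_mono
    (star_le_finTypeOp (idealExt_ne_bot hJ) (idealExt_fg hJfg) (idealExt_mono hJI))

namespace IsSemistarOperation

variable (hstar : IsSemistarOperation star)

include hstar

theorem mem_finTypeOp {E : Submodule D K} (hE : E ≠ ⊥) {x : K} :
    x ∈ finTypeOp star E ↔ ∃ F : Submodule D K, F ≠ ⊥ ∧ F.FG ∧ F ≤ E ∧ x ∈ star F := by
  refine ⟨fun hx => ?_, fun ⟨F, hF, hFfg, hFE, hx⟩ => star_le_finTypeOp hF hFfg hFE hx⟩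
  let S := {F : Submodule D K // F ≠ ⊥ ∧ F.FG ∧ F ≤ E}
  obtain ⟨a, ha, ha0⟩ := Submodule.exists_mem_ne_zero_of_ne_bot hE
  have : Nonempty S :=
    ⟨⟨Submodule.span D {a}, by simpa using ha0, Submodule.fg_span_singleton a, by simpa using ha⟩⟩
  have hdir : Directed (· ≤ ·) fun F : S => star F.1 := fun F G =>
    have hFG : F.1 ⊔ G.1 ≠ ⊥ := ne_bot_of_le_ne_bot F.2.1 le_sup_left
    ⟨⟨F.1 ⊔ G.1, hFG, F.2.2.1.sup G.2.2.1, sup_le F.2.2.2 G.2.2.2⟩,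
      hstar.mono F.2.1 hFG le_sup_left, hstar.mono G.2.1 hFG le_sup_right⟩
  have hx' : x ∈ ⨆ F : S, star F.1 := by
    simpa only [S, finTypeOp, iSup_subtype, iSup_and] using hx
  obtain ⟨F, hF⟩ := (Submodule.mem_iSup_of_directed _ hdir).1 hx'
  exact ⟨F.1, F.2.1, F.2.2.1, F.2.2.2, hF⟩

theorem finTypeOp_le {E : Submodule D K} (hE : E ≠ ⊥) : finTypeOp star E ≤ star E :=
  iSup₂_le fun _ hF => iSup₂_le fun _ hFE => hstar.mono hF hE hFE

theorem exists_fg_le_star_of_le_finTypeOp {E H : Submodule D K} (hE : E ≠ ⊥) (hH : H.FG)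
    (hle : H ≤ finTypeOp star E) :
    ∃ G : Submodule D K, G ≠ ⊥ ∧ G.FG ∧ G ≤ E ∧ H ≤ star G := by
  induction H, hH using Submodule.fg_induction with
  | singleton x =>
    simpa only [Submodule.span_singleton_le_iff_mem, hstar.mem_finTypeOp hE] using hle
  | sup A B _ _ ihA ihB =>
    obtain ⟨G, hG, hGfg, hGE, hAG⟩ := ihA (le_sup_left.trans hle)
    obtain ⟨G', hG', hGfg', hGE', hBG'⟩ := ihB (le_sup_right.trans hle)
    have hsup : G ⊔ G' ≠ ⊥ := ne_bot_of_le_ne_bot hG le_sup_left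
    exact ⟨G ⊔ G', hsup, hGfg.sup hGfg', sup_le hGE hGE',
      sup_le (hAG.trans (hstar.mono hG hsup le_sup_left))
        (hBG'.trans (hstar.mono hG' hsup le_sup_right))⟩

theorem map_finTypeOp_le {x : K} (hx : x ≠ 0) (E : Submodule D K) :
    (finTypeOp star E).map (LinearMap.mulLeft D x) ≤
      finTypeOp star (E.map (LinearMap.mulLeft D x)) := by
  simp only [finTypeOp, Submodule.map_iSup, iSup_le_iff]
  intro F hF hFfg hFE
  rw [← hstar.map_smul x hx hF]
  refine star_le_finTypeOp ?_ (hFfg.map _) (Submodule.map_mono hFE)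
  rw [← Submodule.map_bot (LinearMap.mulLeft D x)]
  exact (Submodule.map_injective_of_injective (mul_right_injective₀ hx)).ne hF

theorem le_finTypeOp {E : Submodule D K} (hE : E ≠ ⊥) : E ≤ finTypeOp star E := by
  intro x hx
  obtain ⟨a, ha, ha0⟩ := Submodule.exists_mem_ne_zero_of_ne_bot hE
  have hne : Submodule.span D {a, x} ≠ ⊥ := fun hbot =>
    ha0 ((Submodule.mem_bot D).1 (hbot ▸ Submodule.subset_span (Set.mem_insert a {x})))
  exact star_le_finTypeOp hne (Submodule.fg_span (Set.toFinite _))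
    (Submodule.span_le.2 (Set.pair_subset ha hx))
    (hstar.le_star hne (Submodule.subset_span (by simp)))

protected theorem finTypeOp : IsSemistarOperation (finTypeOp star) where
  ne_bot hE := ne_bot_of_le_ne_bot hE (hstar.le_finTypeOp hE)
  map_smul x hx E _ := by
    have hcancel {y z : K} (hyz : y * z = 1) (F : Submodule D K) :
        (F.map (LinearMap.mulLeft D z)).map (LinearMap.mulLeft D y) = F := by
      rw [← Submodule.map_comp, ← LinearMap.mulLeft_mul, hyz, LinearMap.mulLeft_one,
        Submodule.map_id]
    refine le_antisymm ?_ (hstar.map_finTypeOp_le hx E)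
    have hle := Submodule.map_mono (f := LinearMap.mulLeft D x)
      (hstar.map_finTypeOp_le (inv_ne_zero hx) (E.map (LinearMap.mulLeft D x)))
    rwa [hcancel (inv_mul_cancel₀ hx), hcancel (mul_inv_cancel₀ hx)] at hle
  mono _ _ hEF := iSup₂_le fun _ hG => iSup₂_le fun hGfg hGE =>
    star_le_finTypeOp hG hGfg (hGE.trans hEF)
  le_star := hstar.le_finTypeOp
  star_star {E} hE := by
    have hE' := ne_bot_of_le_ne_bot hE (hstar.le_finTypeOp hE)
    refine le_antisymm (iSup₂_le fun F hF => iSup₂_le fun hFfg hFE => ?_) (hstar.le_finTypeOp hE')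
    obtain ⟨G, hG, hGfg, hGE, hFG⟩ := hstar.exists_fg_le_star_of_le_finTypeOp hE hFfg hFE
    calc star F ≤ star (star G) := hstar.mono hF (hstar.ne_bot hG) hFG
      _ = star G := hstar.star_star hG
      _ ≤ finTypeOp star E := star_le_finTypeOp hG hGfg hGE

variable [IsFractionRing D K] {I : Ideal D}

theorem quasiClosure_finTypeOp_le (hI : I ≠ ⊥) :
    quasiClosure (finTypeOp star) I ≤ quasiClosure star I :=
  Submodule.comap_mono (hstar.finTypeOp_le (idealExt_ne_bot hI))

theorem mem_quasiClosure_finTypeOp (hI : I ≠ ⊥) {x : D} :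
    x ∈ quasiClosure (finTypeOp star) I ↔
      ∃ J : Ideal D, J ≠ ⊥ ∧ J.FG ∧ J ≤ I ∧ x ∈ quasiClosure star J := by
  rw [mem_quasiClosure, hstar.mem_finTypeOp (idealExt_ne_bot hI)]
  refine ⟨fun ⟨F, hF, hFfg, hFI, hx⟩ => ?_, fun ⟨J, hJ, hJfg, hJI, hx⟩ =>
    ⟨idealExt K J, idealExt_ne_bot hJ, idealExt_fg hJfg, idealExt_mono hJI, hx⟩⟩
  have hmap : idealExt K (F.comap (Algebra.linearMap D K)) = F :=
    (Submodule.map_comap_eq _ _).trans (inf_eq_right.2 (hFI.trans LinearMap.map_le_range))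
  refine ⟨F.comap (Algebra.linearMap D K), ?_, ?_, ?_, by rwa [mem_quasiClosure, hmap]⟩
  · intro hbot
    rw [hbot, idealExt, Submodule.map_bot] at hmap
    exact hF hmap.symm
  · exact Submodule.fg_of_fg_map_injective _ (IsFractionRing.injective D K) (hmap.symm ▸ hFfg)
  · exact fun y hy => algebraMap_mem_idealExt.1 (hFI hy)

end IsSemistarOperation

end FiniteType

section QuasiMaximal

variable {D K : Type*} [CommRing D] [Field K] [Algebra D K]
variable {star : Submodule D K → Submodule D K} {I M N : Ideal D}

namespace QuasiStarMaximal

theorem quasiStarIdeal (hM : QuasiStarMaximal star M) : QuasiStarIdeal star M :=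
  hM.1

theorem ne_bot (hM : QuasiStarMaximal star M) : M ≠ ⊥ :=
  hM.1.1

theorem quasiClosure_eq (hM : QuasiStarMaximal star M) : quasiClosure star M = M :=
  hM.1.quasiClosure_eq

theorem ne_top (hM : QuasiStarMaximal star M) : M ≠ ⊤ :=
  hM.2.1

theorem eq_of_le (hM : QuasiStarMaximal star M) (hN : QuasiStarMaximal star N) (hMN : M ≤ N) :
    M = N :=
  (hM.2.2 N hN.1 hN.ne_top hMN).symm

theorem isPrime [IsFractionRing D K] (hM : QuasiStarMaximal star M)
    (hstar : IsSemistarOperation star) : M.IsPrime := by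
  have : IsDomain D := (IsFractionRing.injective D K).isDomain _
  refine ⟨hM.ne_top, fun {a b} hab => or_iff_not_imp_left.2 fun ha => ?_⟩
  rcases eq_or_ne b 0 with rfl | hb
  · exact M.zero_mem
  have hbot : M ⊔ Ideal.span {a} ≠ ⊥ := ne_bot_of_le_ne_bot hM.ne_bot le_sup_left
  have hle := hstar.le_quasiClosure hbot
  have htop : quasiClosure star (M ⊔ Ideal.span {a}) = ⊤ := by
    by_contra hne
    have heq := hM.2.2 _ (hstar.quasiStarIdeal_quasiClosure hbot) hne (le_sup_left.trans hle)
    exact ha (heq ▸ hle (le_sup_right (a := M) (Ideal.mem_span_singleton_self a)))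
  have hmul : Ideal.span {b} * (M ⊔ Ideal.span {a}) ≤ M := by
    rw [Ideal.mul_sup, Ideal.span_singleton_mul_span_singleton, sup_le_iff,
      Ideal.span_singleton_le_iff_mem, mul_comm b a]
    exact ⟨Ideal.mul_le_right, hab⟩
  have hbmem : b * 1 ∈ quasiClosure star (Ideal.span {b} * (M ⊔ Ideal.span {a})) :=
    (hstar.mul_mem_quasiClosure_iff hbot hb).2 (htop ▸ Submodule.mem_top)
  have hne : Ideal.span {b} * (M ⊔ Ideal.span {a}) ≠ ⊥ := by simp [hb, hbot]
  rw [mul_one] at hbmem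
  exact hM.quasiClosure_eq ▸ hstar.quasiClosure_mono hne hmul hbmem

end QuasiStarMaximal

namespace IsSemistarOperation

variable [IsFractionRing D K] (hstar : IsSemistarOperation star)

include hstar

theorem exists_le_quasiStarMaximal (hI : I ≠ ⊥) (htop : quasiClosure (finTypeOp star) I ≠ ⊤) :
    ∃ M, QuasiStarMaximal (finTypeOp star) M ∧ I ≤ M := by
  have hf := hstar.finTypeOp
  let S : Set (Ideal D) := {J | I ≤ J ∧ quasiClosure (finTypeOp star) J ≠ ⊤}
  have hchain : ∀ c ⊆ S, IsChain (· ≤ ·) c → ∀ J ∈ c, ∃ ub ∈ S, ∀ L ∈ c, L ≤ ub := by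
    intro c hc hchain J hJ
    have hIc : I ≤ sSup c := (hc hJ).1.trans (le_sSup hJ)
    refine ⟨sSup c, ⟨hIc, fun h => ?_⟩, fun _ => le_sSup⟩
    -- `1` lies in the closure of a finitely generated subideal, which some member of `c` contains.
    obtain ⟨F, hF, hFfg, hFc, h1F⟩ := (hstar.mem_quasiClosure_finTypeOp
      (ne_bot_of_le_ne_bot hI hIc)).1 ((Ideal.eq_top_iff_one _).1 h)
    obtain ⟨L, hL, hFL⟩ := (CompleteLattice.isCompactElement_iff_le_of_directed_sSup_le _ F).1
      ((Submodule.fg_iff_compact F).1 hFfg) c ⟨J, hJ⟩ hchain.directedOn hFc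
    exact (hc hL).2 ((Ideal.eq_top_iff_one _).2
      (quasiClosure_le_quasiClosure_finTypeOp hF hFfg hFL h1F))
  obtain ⟨M, -, ⟨hIM, hMtop⟩, hmax⟩ := zorn_le_nonempty₀ S hchain I ⟨le_rfl, htop⟩
  have hM : M ≠ ⊥ := ne_bot_of_le_ne_bot hI hIM
  have hle := hf.le_quasiClosure hM
  have hcl : quasiClosure (finTypeOp star) M ≤ M :=
    hmax ⟨hIM.trans hle,
      (hf.quasiStarIdeal_quasiClosure hM).quasiClosure_eq.symm ▸ hMtop⟩ hle
  refine ⟨M, ⟨⟨hM, hcl.antisymm hle⟩, ?_, fun J hJ hJtop hMJ => ?_⟩, hIM⟩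
  · exact fun h => hMtop (top_le_iff.1 (h ▸ hle))
  · exact (hmax ⟨hIM.trans hMJ, hJ.quasiClosure_eq.symm ▸ hJtop⟩ hMJ).antisymm hMJ

theorem quasiClosure_finTypeOp_eq_top_iff (hI : I ≠ ⊥) :
    quasiClosure (finTypeOp star) I = ⊤ ↔
      ∀ M, QuasiStarMaximal (finTypeOp star) M → ¬ I ≤ M := by
  refine ⟨fun htop M hM hIM => hM.ne_top (top_le_iff.1 ?_), fun h => by_contra fun htop => ?_⟩
  · rw [← htop, ← hM.quasiClosure_eq]
    exact hstar.finTypeOp.quasiClosure_mono hI hIM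
  · obtain ⟨M, hM, hIM⟩ := hstar.exists_le_quasiStarMaximal hI htop
    exact h M hM hIM

theorem finTypeOp_idealExt_eq_iff (hI : I ≠ ⊥) :
    finTypeOp star (idealExt K I) = finTypeOp star 1 ↔
      ∀ M, QuasiStarMaximal (finTypeOp star) M → ¬ I ≤ M := by
  rw [← hstar.finTypeOp.quasiClosure_eq_top_iff hI, hstar.quasiClosure_finTypeOp_eq_top_iff hI]

end IsSemistarOperation

end QuasiMaximal

section LocalizationAtPrime

variable {D : Type*} [CommRing D]

/-- The extension `I·D_M` of an ideal `I` to the localization at a prime `M`; the ideals `I·D_M` for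
quasi-⋆_f-maximal `M` determine `I^⋆̃`. -/
abbrev idealAtPrime (M : Ideal D) [M.IsPrime] (I : Ideal D) : Ideal (Localization.AtPrime M) :=
  I.map (algebraMap D (Localization.AtPrime M))

variable {M : Ideal D} [M.IsPrime] {I J : Ideal D}

theorem algebraMap_mem_idealAtPrime {x : D} :
    algebraMap D (Localization.AtPrime M) x ∈ idealAtPrime M I ↔ ∃ s ∉ M, s * x ∈ I :=
  IsLocalization.algebraMap_mem_map_algebraMap_iff M.primeCompl _ _ _

theorem idealAtPrime_le_iff :
    idealAtPrime M I ≤ idealAtPrime M J ↔ ∀ x ∈ I, ∃ s ∉ M, s * x ∈ J :=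
  Ideal.map_le_iff_le_comap.trans (forall₂_congr fun _ _ => algebraMap_mem_idealAtPrime)

theorem idealAtPrime_eq_top_iff : idealAtPrime M I = ⊤ ↔ ¬ I ≤ M := by
  rw [Ideal.eq_top_iff_one, ← map_one (algebraMap D _), algebraMap_mem_idealAtPrime,
    SetLike.not_le_iff_exists]
  simp only [mul_one, and_comm]

theorem idealAtPrime_ne_bot [IsDomain D] (hI : I ≠ ⊥) : idealAtPrime M I ≠ ⊥ := by
  rwa [Ne, Ideal.map_eq_bot_iff_of_injective
    (IsLocalization.injective _ M.primeCompl_le_nonZeroDivisors)]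

theorem not_isField_localization_atPrime [IsDomain D] (hM : M ≠ ⊥) :
    ¬ IsField (Localization.AtPrime M) := by
  rw [IsLocalRing.isField_iff_maximalIdeal_eq, ← Localization.AtPrime.map_eq_maximalIdeal]
  exact idealAtPrime_ne_bot hM

theorem exists_span_singleton_mul_le (hI : I.FG) (hIJ : idealAtPrime M I ≤ idealAtPrime M J) :
    ∃ s ∉ M, Ideal.span {s} * I ≤ J := by
  induction I, hI using Submodule.fg_induction with
  | singleton x =>
    obtain ⟨s, hs, hsx⟩ := idealAtPrime_le_iff.1 hIJ x (Ideal.mem_span_singleton_self x)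
    refine ⟨s, hs, ?_⟩
    rwa [← Ideal.span, Ideal.span_singleton_mul_span_singleton, Ideal.span_singleton_le_iff_mem]
  | sup A B _ _ ihA ihB =>
    obtain ⟨s, hs, hsA⟩ := ihA ((Ideal.map_mono le_sup_left).trans hIJ)
    obtain ⟨t, ht, htB⟩ := ihB ((Ideal.map_mono le_sup_right).trans hIJ)
    refine ⟨s * t, fun h => (‹M.IsPrime›.mem_or_mem h).elim hs ht, ?_⟩
    rw [← Ideal.span_singleton_mul_span_singleton, Ideal.mul_sup, sup_le_iff]
    refine ⟨le_trans ?_ hsA, le_trans ?_ htB⟩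
    · exact Ideal.mul_mono_left Ideal.mul_le_left
    · exact Ideal.mul_mono_left Ideal.mul_le_right

theorem exists_idealAtPrime_eq_span_singleton [IsBezout (Localization.AtPrime M)] (hI : I.FG) :
    ∃ a ∈ I, idealAtPrime M I = idealAtPrime M (Ideal.span {a}) := by
  obtain ⟨y, hy⟩ := (IsBezout.isPrincipal_of_FG _ (Ideal.FG.map hI _) :
    (idealAtPrime M I).IsPrincipal)
  have hyI : y ∈ idealAtPrime M I := hy ▸ Submodule.mem_span_singleton_self y
  obtain ⟨⟨a, s⟩, has⟩ := (IsLocalization.mem_map_algebraMap_iff M.primeCompl _).1 hyI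
  refine ⟨a, a.2, ?_⟩
  rw [hy, idealAtPrime, Ideal.map_span, Set.image_singleton, ← has]
  exact (Ideal.span_singleton_mul_right_unit (IsLocalization.map_units _ s) y).symm

theorem eq_of_isPrime_of_le [IsDomain D] [Ring.DimensionLEOne (Localization.AtPrime M)]
    {Q : Ideal D} (hQ : Q.IsPrime) (hQ0 : Q ≠ ⊥) (hQM : Q ≤ M) : Q = M := by
  have hprime := Ideal.isPrime_map_of_isLocalizationAtPrime M (S := Localization.AtPrime M) hQM
  have hmax := IsLocalRing.eq_maximalIdeal (hprime.isMaximal (idealAtPrime_ne_bot hQ0))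
  rw [← Ideal.under_map_of_isLocalizationAtPrime M (S := Localization.AtPrime M) hQM]
  exact (congrArg (Ideal.under D) hmax).trans (IsLocalization.AtPrime.under_maximalIdeal _ M)

theorem exists_idealAtPrime_eq_pow [IsDomain D] [IsPrincipalIdealRing (Localization.AtPrime M)]
    (hI : I ≠ ⊥) (hIM : I ≤ M) : ∃ k, 1 ≤ k ∧ idealAtPrime M I = idealAtPrime M M ^ k := by
  obtain ⟨k, hk⟩ := exists_maximalIdeal_pow_eq_of_principal (Localization.AtPrime M)
    (IsPrincipalIdealRing.principal _) (idealAtPrime M I) (idealAtPrime_ne_bot hI)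
  rw [← Localization.AtPrime.map_eq_maximalIdeal] at hk
  refine ⟨k, Nat.one_le_iff_ne_zero.2 ?_, hk⟩
  rintro rfl
  exact idealAtPrime_eq_top_iff.1 (hk.trans ((pow_zero _).trans Ideal.one_eq_top)) hIM

theorem idealAtPrime_prod_pow {ι : Type*} [Fintype ι] (P : ι → Ideal D) (e : ι → ℕ) :
    idealAtPrime M (∏ i, P i ^ e i) = ∏ i, idealAtPrime M (P i) ^ e i := by
  simp only [idealAtPrime, ← Ideal.mapHom_apply, map_prod, map_pow]

theorem idealAtPrime_prod_pow_eq_top {ι : Type*} [Fintype ι] {P : ι → Ideal D} (e : ι → ℕ)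
    (h : ∀ i, ¬ P i ≤ M) : idealAtPrime M (∏ i, P i ^ e i) = ⊤ := by
  rw [idealAtPrime_prod_pow, ← Ideal.one_eq_top]
  exact Finset.prod_eq_one fun i _ => by
    rw [idealAtPrime_eq_top_iff.2 (h i), ← Ideal.one_eq_top, one_pow]

theorem idealAtPrime_prod_pow_eq {ι : Type*} [Fintype ι] {P : ι → Ideal D} (e : ι → ℕ) (i : ι)
    (h : ∀ j, P j ≤ M → j = i) :
    idealAtPrime M (∏ j, P j ^ e j) = idealAtPrime M (P i) ^ e i := by
  rw [idealAtPrime_prod_pow]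
  refine Finset.prod_eq_single_of_mem i (Finset.mem_univ i) fun j _ hji => ?_
  rw [idealAtPrime_eq_top_iff.2 (mt (h j) hji), ← Ideal.one_eq_top, one_pow]

end LocalizationAtPrime

section StableOperation

variable {D K : Type*} [CommRing D] [Field K] [Algebra D K]
variable {star : Submodule D K → Submodule D K}

theorem mem_extendToPrime {Q : Ideal D} [Q.IsPrime] {E : Submodule D K} {x : K} :
    x ∈ extendToPrime Q E ↔ ∃ s ∉ Q, algebraMap D K s * x ∈ E := by
  refine ⟨fun hx => ?_, fun hx => Submodule.subset_span hx⟩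
  induction hx using Submodule.span_induction with
  | mem _ hx => exact hx
  | zero => exact ⟨1, Q.one_notMem, by simp⟩
  | add x y _ _ hx hy =>
    obtain ⟨s, hs, hsx⟩ := hx
    obtain ⟨t, ht, hty⟩ := hy
    refine ⟨s * t, fun h => (‹Q.IsPrime›.mem_or_mem h).elim hs ht, ?_⟩
    convert add_mem (E.smul_mem t hsx) (E.smul_mem s hty) using 1
    simp only [Algebra.smul_def, map_mul]
    ring
  | smul a x _ hx =>
    obtain ⟨s, hs, hsx⟩ := hx
    exact ⟨s, hs, by simpa only [mul_smul_comm] using E.smul_mem a hsx⟩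

variable [IsFractionRing D K]

namespace IsSemistarOperation

variable (hstar : IsSemistarOperation star) {I J : Ideal D}

include hstar

theorem mem_stableOp {E : Submodule D K} {x : K} :
    x ∈ stableOp star E ↔
      ∀ M, QuasiStarMaximal (finTypeOp star) M → ∃ s ∉ M, algebraMap D K s * x ∈ E := by
  simp only [stableOp, Submodule.mem_iInf]
  refine forall₂_congr fun M hM => ?_
  have := hM.isPrime hstar.finTypeOp
  exact mem_extendToPrime

theorem stableOp_idealExt_le_iff :
    stableOp star (idealExt K I) ≤ stableOp star (idealExt K J) ↔
      ∀ (M : Ideal D) [M.IsPrime], QuasiStarMaximal (finTypeOp star) M →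
        idealAtPrime M I ≤ idealAtPrime M J := by
  simp only [idealAtPrime_le_iff]
  constructor
  · intro h M _ hM x hx
    have hxI : algebraMap D K x ∈ stableOp star (idealExt K I) :=
      hstar.mem_stableOp.2 fun Q hQ =>
        have := hQ.isPrime hstar.finTypeOp
        ⟨1, Q.one_notMem, by simpa using algebraMap_mem_idealExt.2 hx⟩
    obtain ⟨s, hs, hsx⟩ := hstar.mem_stableOp.1 (h hxI) M hM
    rw [← map_mul] at hsx
    exact ⟨s, hs, algebraMap_mem_idealExt.1 hsx⟩
  · refine fun h x hx => hstar.mem_stableOp.2 fun M hM => ?_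
    have hprime := hM.isPrime hstar.finTypeOp
    obtain ⟨s, hs, y, hy, hyx⟩ := hstar.mem_stableOp.1 hx M hM
    obtain ⟨t, ht, hty⟩ := h M hM y hy
    refine ⟨t * s, fun hts => (hprime.mem_or_mem hts).elim ht hs, ?_⟩
    rw [map_mul, mul_assoc, ← hyx, Algebra.linearMap_apply, ← map_mul]
    exact algebraMap_mem_idealExt.2 hty

theorem stableOp_idealExt_eq_iff :
    stableOp star (idealExt K I) = stableOp star (idealExt K J) ↔
      ∀ (M : Ideal D) [M.IsPrime], QuasiStarMaximal (finTypeOp star) M →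
        idealAtPrime M I = idealAtPrime M J := by
  simp only [le_antisymm_iff, hstar.stableOp_idealExt_le_iff, ← forall_and]

theorem stableOp_idealExt_ne_iff :
    stableOp star (idealExt K I) ≠ stableOp star 1 ↔
      ∃ M, QuasiStarMaximal (finTypeOp star) M ∧ I ≤ M := by
  rw [← idealExt_top, Ne, hstar.stableOp_idealExt_eq_iff]
  simp only [idealAtPrime, Ideal.map_top, idealAtPrime_eq_top_iff]
  refine ⟨fun h => ?_, fun ⟨M, hM, hIM⟩ h => ?_⟩
  · push Not at h
    obtain ⟨M, -, hM, hIM⟩ := h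
    exact ⟨M, hM, hIM⟩
  · have := hM.isPrime hstar.finTypeOp
    exact h M hM hIM

theorem quasiStarIdeal_le_of_forall_idealAtPrime_le [IsDomain D] (hI : QuasiStarIdeal star I)
    (h : ∀ (M : Ideal D) [M.IsPrime], QuasiStarMaximal (finTypeOp star) M →
      idealAtPrime M J ≤ idealAtPrime M I) : J ≤ I := by
  intro x hxJ
  rcases eq_or_ne x 0 with rfl | hx
  · exact I.zero_mem
  -- The colon ideal `(I : x)` lies in no quasi-maximal ideal, so its closure contains `1`.
  let C : Ideal D := Submodule.comap (LinearMap.mulRight D x) I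
  have hC : C ≠ ⊥ := ne_bot_of_le_ne_bot hI.1 fun s hs => I.mul_mem_right x hs
  have h1C : (1 : D) ∈ quasiClosure (finTypeOp star) C := by
    rw [(hstar.quasiClosure_finTypeOp_eq_top_iff hC).2 fun M hM hCM => ?_]
    · trivial
    have := hM.isPrime hstar.finTypeOp
    obtain ⟨s, hs, hsx⟩ := idealAtPrime_le_iff.1 (h M hM) x hxJ
    exact hs (hCM hsx)
  have hxC : Ideal.span {x} * C ≤ I :=
    Ideal.span_singleton_mul_le_iff.2 fun s hs => by rw [mul_comm]; exact hs
  have hxmem := (hstar.mul_mem_quasiClosure_iff hC hx).2 (hstar.quasiClosure_finTypeOp_le hC h1C)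
  rw [mul_one] at hxmem
  exact hI.quasiClosure_eq ▸ hstar.quasiClosure_mono (by simp [hx, hC]) hxC hxmem

end IsSemistarOperation

end StableOperation

section ValuationLocalizations

variable {D K : Type*} [CommRing D] [IsDomain D] [Field K] [Algebra D K] [IsFractionRing D K]
variable {star : Submodule D K → Submodule D K} {I M : Ideal D} [M.IsPrime]

namespace IsSemistarOperation

variable (hstar : IsSemistarOperation star) [ValuationRing (Localization.AtPrime M)]

include hstar

theorem idealAtPrime_quasiClosure_span_singleton_le (hM : QuasiStarIdeal (finTypeOp star) M)
    {a : D} (ha : a ≠ 0) :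
    idealAtPrime M (quasiClosure star (Ideal.span {a})) ≤ idealAtPrime M (Ideal.span {a}) := by
  have hspan {c : D} (hc : c ≠ 0) : Ideal.span {c} ≠ ⊥ := by simpa using hc
  refine idealAtPrime_le_iff.2 fun y hy => ?_
  rcases ValuationRing.dvd_total (algebraMap D (Localization.AtPrime M) a) (algebraMap D _ y)
    with hdvd | hdvd
  · rwa [← Ideal.mem_span_singleton, ← Set.image_singleton, ← Ideal.map_span,
      algebraMap_mem_idealAtPrime] at hdvd
  rw [← Ideal.mem_span_singleton, ← Set.image_singleton, ← Ideal.map_span,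
    algebraMap_mem_idealAtPrime] at hdvd
  obtain ⟨t, ht, hta⟩ := hdvd
  obtain ⟨m, hm⟩ := Ideal.mem_span_singleton'.1 hta
  have ht0 : t ≠ 0 := by
    rintro rfl
    exact ht M.zero_mem
  have hm0 : m ≠ 0 := by
    rintro rfl
    exact mul_ne_zero ht0 ha (by rw [← hm, zero_mul])
  refine ⟨m, fun hmM => ht ?_, hm ▸ Ideal.mul_mem_left _ t (Ideal.mem_span_singleton_self a)⟩
  -- `t * a = m * y` lies in the closure of `(m * a)`; cancelling `a` puts `t` in that of `(m)`.
  have hmy : m * y ∈ quasiClosure star (Ideal.span {m} * Ideal.span {a}) :=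
    (hstar.mul_mem_quasiClosure_iff (hspan ha) hm0).2 hy
  rw [hm, mul_comm t, mul_comm (Ideal.span {m}),
    hstar.mul_mem_quasiClosure_iff (hspan hm0) ha] at hmy
  rw [← hM.quasiClosure_eq]
  exact quasiClosure_le_quasiClosure_finTypeOp (hspan hm0) (Submodule.fg_span_singleton m)
    ((Ideal.span_singleton_le_iff_mem _).2 hmM) hmy

theorem idealAtPrime_quasiClosure_le (hM : QuasiStarIdeal (finTypeOp star) M) (hI : I ≠ ⊥)
    (hfg : I.FG) : idealAtPrime M (quasiClosure star I) ≤ idealAtPrime M I := by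
  obtain ⟨a, haI, hIa⟩ := exists_idealAtPrime_eq_span_singleton (M := M) hfg
  have ha : a ≠ 0 := by
    rintro rfl
    exact idealAtPrime_ne_bot hI (hIa.trans (by simp))
  obtain ⟨s, hs, hsI⟩ := exists_span_singleton_mul_le hfg hIa.le
  have hs0 : s ≠ 0 := fun h => hs (h ▸ M.zero_mem)
  refine idealAtPrime_le_iff.2 fun x hx => ?_
  have hsx : s * x ∈ quasiClosure star (Ideal.span {a}) :=
    hstar.quasiClosure_mono (by simp [hs0, hI]) hsI
      ((hstar.mul_mem_quasiClosure_iff hI hs0).2 hx)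
  obtain ⟨t, ht, htsx⟩ := idealAtPrime_le_iff.1
    (hstar.idealAtPrime_quasiClosure_span_singleton_le hM ha) _ hsx
  refine ⟨t * s, fun h => (‹M.IsPrime›.mem_or_mem h).elim ht hs, ?_⟩
  rw [mul_assoc]
  exact (Ideal.span_singleton_le_iff_mem _).2 haI htsx

end IsSemistarOperation

end ValuationLocalizations

section Dedekind

variable {D K : Type*} [CommRing D] [Field K] [Algebra D K]
variable {star : Submodule D K → Submodule D K} {I M : Ideal D}

theorem StarNoetherian.wellFoundedGT (h : StarNoetherian star) :
    WellFoundedGT {J : Ideal D // QuasiStarIdeal star J} :=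
  wellFoundedGT_iff_monotone_chain_condition.2 fun c =>
    (h ⟨fun n => (c n).1, fun _ _ hmn => c.monotone hmn⟩ fun n => (c n).2).imp
      fun _ hn m hm => Subtype.ext (hn m hm).symm

theorem StarADD.isDiscreteValuationRing [IsDomain D] [M.IsPrime] (h : StarADD star)
    (hM : QuasiStarMaximal (finTypeOp star) M) :
    IsDiscreteValuationRing (Localization.AtPrime M) :=
  (h M hM).2

theorem StarFiniteCharacter.finite_setOf_le (h : StarFiniteCharacter star) (hI : I ≠ ⊥) :
    {M | QuasiStarMaximal (finTypeOp star) M ∧ I ≤ M}.Finite := by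
  obtain ⟨a, haI, ha⟩ := Submodule.exists_mem_ne_zero_of_ne_bot hI
  exact (h a ha).subset fun M hM => ⟨hM.1, hM.2 haI⟩

variable [IsFractionRing D K]

theorem StarNoetherian.exists_fg_le_quasiClosure (h : StarNoetherian star)
    (hstar : IsSemistarOperation star) (hI : I ≠ ⊥) :
    ∃ F : Ideal D, F ≠ ⊥ ∧ F.FG ∧ F ≤ I ∧ I ≤ quasiClosure star F := by
  have := h.wellFoundedGT
  let cl (F : {F : Ideal D // F ≠ ⊥ ∧ F.FG ∧ F ≤ I}) : {J : Ideal D // QuasiStarIdeal star J} :=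
    ⟨_, hstar.quasiStarIdeal_quasiClosure F.2.1⟩
  obtain ⟨a, haI, ha⟩ := Submodule.exists_mem_ne_zero_of_ne_bot hI
  obtain ⟨⟨F, hF, hFfg, hFI⟩, -, hmax⟩ := (InvImage.wf cl wellFounded_gt).has_min Set.univ
    ⟨⟨Ideal.span {a}, by simpa using ha, Submodule.fg_span_singleton a,
      (Ideal.span_singleton_le_iff_mem _).2 haI⟩, trivial⟩
  refine ⟨F, hF, hFfg, hFI, fun x hx => ?_⟩
  have hF' : F ⊔ Ideal.span {x} ≠ ⊥ := ne_bot_of_le_ne_bot hF le_sup_left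
  have hle : quasiClosure star F ≤ quasiClosure star (F ⊔ Ideal.span {x}) :=
    hstar.quasiClosure_mono hF le_sup_left
  have hge := not_lt_iff_le_imp_ge.1 (hmax ⟨F ⊔ Ideal.span {x}, hF',
    Submodule.FG.sup hFfg (Submodule.fg_span_singleton x),
    sup_le hFI ((Ideal.span_singleton_le_iff_mem _).2 hx)⟩ trivial) hle
  exact hge (hstar.le_quasiClosure hF' (le_sup_right (a := F) (Ideal.mem_span_singleton_self x)))

theorem StarADD.eq_of_isPrime_of_le [IsDomain D] (h : StarADD star)
    (hstar : IsSemistarOperation star) (hM : QuasiStarMaximal (finTypeOp star) M) {Q : Ideal D}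
    (hQ : Q.IsPrime) (hQ0 : Q ≠ ⊥) (hQM : Q ≤ M) : Q = M := by
  have := hM.isPrime hstar.finTypeOp
  have := h.isDiscreteValuationRing hM
  exact _root_.eq_of_isPrime_of_le hQ hQ0 hQM

namespace StarDedekind

variable [IsDomain D] (h : StarDedekind star) (hstar : IsSemistarOperation star)

include h hstar

theorem exists_fg_idealAtPrime_eq (hI : I ≠ ⊥) :
    ∃ F : Ideal D, F.FG ∧ ∀ (M : Ideal D) [M.IsPrime], QuasiStarMaximal (finTypeOp star) M →
      idealAtPrime M F = idealAtPrime M I ∧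
        idealAtPrime M (quasiClosure star I) = idealAtPrime M I := by
  obtain ⟨F, hF, hFfg, hFI, hIF⟩ := h.1.exists_fg_le_quasiClosure hstar hI
  refine ⟨F, hFfg, fun M _ hM => ?_⟩
  have := (h.2 M hM).2
  have hcl : idealAtPrime M (quasiClosure star I) ≤ idealAtPrime M F :=
    (Ideal.map_mono (hstar.quasiClosure_le_of_le hI hF hIF)).trans
      (hstar.idealAtPrime_quasiClosure_le hM.quasiStarIdeal hF hFfg)
  have hle : idealAtPrime M I ≤ idealAtPrime M (quasiClosure star I) :=
    Ideal.map_mono (hstar.le_quasiClosure hI)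
  exact ⟨(Ideal.map_mono hFI).antisymm (hle.trans hcl),
    (hcl.trans (Ideal.map_mono hFI)).antisymm hle⟩

theorem quasiClosure_le (hM : QuasiStarMaximal (finTypeOp star) M) (hI : I ≠ ⊥) (hIM : I ≤ M) :
    quasiClosure star I ≤ M := by
  have := hM.isPrime hstar.finTypeOp
  obtain ⟨F, -, hF⟩ := h.exists_fg_idealAtPrime_eq hstar hI
  by_contra hcl
  rw [← idealAtPrime_eq_top_iff, (hF M hM).2, idealAtPrime_eq_top_iff] at hcl
  exact hcl hIM

theorem starADD : StarADD star := by
  intro M _ hM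
  obtain ⟨hdom, hval⟩ := h.2 M hM
  have hnoeth : IsNoetherianRing (Localization.AtPrime M) := by
    refine (isNoetherianRing_iff_ideal_fg _).2 fun J => ?_
    rcases eq_or_ne J ⊥ with rfl | hJ
    · exact Submodule.fg_bot
    have hmap : idealAtPrime M (J.under D) = J := IsLocalization.map_under M.primeCompl _ J
    have hunder : J.under D ≠ ⊥ := fun hbot => hJ (hmap ▸ hbot ▸ Ideal.map_bot)
    obtain ⟨F, hFfg, hF⟩ := h.exists_fg_idealAtPrime_eq hstar hunder
    rw [← hmap, ← (hF M hM).1]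
    exact Ideal.FG.map hFfg _
  have hfield := not_isField_localization_atPrime hM.ne_bot
  exact ⟨hdom, ((IsDiscreteValuationRing.TFAE _ hfield).out 0 1).2 hval⟩

theorem finite_setOf_le_of_quasiStarIdeal (J : {J : Ideal D // QuasiStarIdeal star J}) :
    {M | QuasiStarMaximal (finTypeOp star) M ∧ J.1 ≤ M}.Finite := by
  have := h.1.wellFoundedGT
  induction J using WellFoundedGT.induction with
  | ind J ih =>
  have hsup (c : D) (hc : c ∉ J.1) :
      {M | QuasiStarMaximal (finTypeOp star) M ∧ J.1 ⊔ Ideal.span {c} ≤ M}.Finite := by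
    have hbot : J.1 ⊔ Ideal.span {c} ≠ ⊥ := ne_bot_of_le_ne_bot J.2.1 le_sup_left
    have hle := hstar.le_quasiClosure hbot
    refine (ih ⟨_, hstar.quasiStarIdeal_quasiClosure hbot⟩ ?_).subset fun M hM =>
      ⟨hM.1, h.quasiClosure_le hstar hM.1 hbot hM.2⟩
    exact lt_of_le_not_ge (le_sup_left.trans hle) fun hge =>
      hc (hge (hle (le_sup_right (a := J.1) (Ideal.mem_span_singleton_self c))))
  by_cases hprime : J.1.IsPrime
  · exact (Set.finite_singleton J.1).subset fun M hM =>
      ((h.starADD hstar).eq_of_isPrime_of_le hstar hM.1 hprime J.2.1 hM.2).symm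
  rw [Ideal.isPrime_iff, not_and_or, not_not] at hprime
  rcases hprime with htop | hmul
  · exact Set.finite_empty.subset fun M hM => hM.1.ne_top (top_le_iff.1 (htop ▸ hM.2))
  push Not at hmul
  obtain ⟨a, b, hab, ha, hb⟩ := hmul
  refine ((hsup a ha).union (hsup b hb)).subset fun M hM => ?_
  have hsup_le {c : D} (hc : c ∈ M) : J.1 ⊔ Ideal.span {c} ≤ M :=
    sup_le hM.2 ((Ideal.span_singleton_le_iff_mem _).2 hc)
  exact ((hM.1.isPrime hstar.finTypeOp).mem_or_mem (hM.2 hab)).imp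
    (fun ha => ⟨hM.1, hsup_le ha⟩) (fun hb => ⟨hM.1, hsup_le hb⟩)

theorem starFiniteCharacter : StarFiniteCharacter star := by
  intro d hd
  have hbot : Ideal.span {d} ≠ ⊥ := by simpa using hd
  exact (h.finite_setOf_le_of_quasiStarIdeal hstar
    ⟨_, hstar.quasiStarIdeal_quasiClosure hbot⟩).subset fun M hM =>
      ⟨hM.1, h.quasiClosure_le hstar hM.1 hbot ((Ideal.span_singleton_le_iff_mem _).2 hM.2)⟩

end StarDedekind

theorem StarADD.starNoetherian [IsDomain D] (hadd : StarADD star) (hfin : StarFiniteCharacter star)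
    (hstar : IsSemistarOperation star) : StarNoetherian star := by
  intro c hc
  have hstab (M : Ideal D) (hM : QuasiStarMaximal (finTypeOp star) M) :
      ∃ n, ∀ [M.IsPrime], ∀ m, n ≤ m → idealAtPrime M (c m) = idealAtPrime M (c n) := by
    have := hM.isPrime hstar.finTypeOp
    have := hadd.isDiscreteValuationRing hM
    obtain ⟨n, hn⟩ := monotone_stabilizes_iff_noetherian.2
      (inferInstanceAs (IsNoetherianRing (Localization.AtPrime M)))
      ⟨fun k => idealAtPrime M (c k), fun i j hij => Ideal.map_mono (c.monotone hij)⟩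
    exact ⟨n, fun m hm => (hn m hm).symm⟩
  choose! N hN using hstab
  have hS := hfin.finite_setOf_le (hc 0).1
  refine ⟨hS.toFinset.sup N, fun m hm => (c.monotone hm).antisymm' ?_⟩
  refine hstar.quasiStarIdeal_le_of_forall_idealAtPrime_le (hc _) fun M _ hM => ?_
  by_cases h0 : c 0 ≤ M
  · have hle : N M ≤ hS.toFinset.sup N := Finset.le_sup (by simpa using ⟨hM, h0⟩)
    rw [hN M hM m (hle.trans hm), hN M hM _ hle]
  · have hM' : ¬ c (hS.toFinset.sup N) ≤ M := fun h => h0 ((c.monotone (Nat.zero_le _)).trans h)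
    exact (idealAtPrime_eq_top_iff.2 hM').symm ▸ le_top

theorem starDedekind_iff [IsDomain D] (hstar : IsSemistarOperation star) :
    StarDedekind star ↔ StarADD star ∧ StarFiniteCharacter star := by
  refine ⟨fun h => ⟨h.starADD hstar, h.starFiniteCharacter hstar⟩, fun ⟨hadd, hfin⟩ =>
    ⟨hadd.starNoetherian hfin hstar, fun M _ hM => ⟨(hadd M hM).1, ?_⟩⟩⟩
  have := hadd.isDiscreteValuationRing hM
  infer_instance

end Dedekind

section Factorization

variable {D K ι : Type*} [CommRing D] [Field K] [Algebra D K] [Fintype ι]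
variable {star : Submodule D K → Submodule D K} {I M : Ideal D} {P : ι → Ideal D} {e : ι → ℕ}

/-- A factorization `I^⋆̃ = (∏ Pᵢ ^ eᵢ)^⋆̃` of an ideal into pairwise ⋆_f-comaximal
quasi-⋆_f-primes. -/
def IsStarFactorization (star : Submodule D K → Submodule D K) (I : Ideal D) (P : ι → Ideal D)
    (e : ι → ℕ) : Prop :=
  (∀ i, QuasiStarPrime (finTypeOp star) (P i)) ∧
    (∀ i j, i ≠ j → finTypeOp star (idealExt K (P i + P j)) = finTypeOp star 1) ∧
    stableOp star (idealExt K I) = stableOp star (idealExt K (∏ i, P i ^ e i))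

/-- Every nonzero ideal has a factorization into quasi-⋆_f-primes: the property that characterizes
⋆-Dedekind domains. -/
def HasStarFactorizations (star : Submodule D K → Submodule D K) : Prop :=
  ∀ I : Ideal D, I ≠ ⊥ →
    ∃ (n : ℕ) (P : Fin n → Ideal D) (e : Fin n → ℕ), IsStarFactorization star I P e

/-- A factorization `I^⋆̃ = (∏ Pᵢ ^ eᵢ)^⋆̃` of an ideal into distinct quasi-⋆_f-maximal ideals with
positive exponents. Over a ⋆-almost Dedekind domain these are the factorizations without trivial
factors. -/
structure IsReducedStarFactorization (star : Submodule D K → Submodule D K) (I : Ideal D)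
    (P : ι → Ideal D) (e : ι → ℕ) : Prop where
  quasiStarMaximal : ∀ i, QuasiStarMaximal (finTypeOp star) (P i)
  injective : Function.Injective P
  one_le : ∀ i, 1 ≤ e i
  stableOp_eq : stableOp star (idealExt K I) = stableOp star (idealExt K (∏ i, P i ^ e i))

variable [IsFractionRing D K]

theorem IsSemistarOperation.finTypeOp_idealExt_add_eq_iff (hstar : IsSemistarOperation star)
    {A B : Ideal D} (hA : A ≠ ⊥) :
    finTypeOp star (idealExt K (A + B)) = finTypeOp star 1 ↔
      ∀ M, QuasiStarMaximal (finTypeOp star) M → A ≤ M → ¬ B ≤ M := by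
  rw [Submodule.add_eq_sup,
    hstar.finTypeOp_idealExt_eq_iff (ne_bot_of_le_ne_bot hA le_sup_left)]
  simp only [sup_le_iff, not_and]

namespace IsStarFactorization

variable (h : IsStarFactorization star I P e) (hstar : IsSemistarOperation star)

include h hstar

theorem eq_of_le_of_le (hM : QuasiStarMaximal (finTypeOp star) M) {i j : ι} (hi : P i ≤ M)
    (hj : P j ≤ M) : i = j :=
  by_contra fun hij =>
    (hstar.finTypeOp_idealExt_add_eq_iff (h.1 i).2.1).1 (h.2.1 i j hij) M hM hi hj

theorem exists_le (hM : QuasiStarMaximal (finTypeOp star) M) (hIM : I ≤ M) : ∃ i, P i ≤ M := by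
  have := hM.isPrime hstar.finTypeOp
  by_contra! hP
  refine idealAtPrime_eq_top_iff.1 ?_ hIM
  rw [hstar.stableOp_idealExt_eq_iff.1 h.2.2 M hM, idealAtPrime_prod_pow_eq_top e hP]

theorem exists_isPrime_idealAtPrime_eq_pow [M.IsPrime]
    (hM : QuasiStarMaximal (finTypeOp star) M) :
    ∃ (Q : Ideal (Localization.AtPrime M)) (k : ℕ), Q.IsPrime ∧ idealAtPrime M I = Q ^ k := by
  by_cases hIM : I ≤ M
  · obtain ⟨i, hi⟩ := h.exists_le hstar hM hIM
    have := (h.1 i).1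
    refine ⟨idealAtPrime M (P i), e i, Ideal.isPrime_map_of_isLocalizationAtPrime M hi, ?_⟩
    rw [hstar.stableOp_idealExt_eq_iff.1 h.2.2 M hM]
    exact idealAtPrime_prod_pow_eq e i fun j hj => h.eq_of_le_of_le hstar hM hj hi
  · refine ⟨IsLocalRing.maximalIdeal _, 0, inferInstance, ?_⟩
    rw [idealAtPrime_eq_top_iff.2 hIM, pow_zero, Ideal.one_eq_top]

end IsStarFactorization

namespace IsReducedStarFactorization

variable (h : IsReducedStarFactorization star I P e) (hstar : IsSemistarOperation star)

include h hstar

theorem isStarFactorization : IsStarFactorization star I P e := by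
  refine ⟨fun i => ⟨(h.quasiStarMaximal i).isPrime hstar.finTypeOp, (h.quasiStarMaximal i).1⟩,
    fun i j hij => ?_, h.stableOp_eq⟩
  refine (hstar.finTypeOp_idealExt_add_eq_iff (h.quasiStarMaximal i).ne_bot).2
    fun M hM hi hj => hij (h.injective ?_)
  rw [(h.quasiStarMaximal i).eq_of_le hM hi, (h.quasiStarMaximal j).eq_of_le hM hj]

theorem idealAtPrime_eq [M.IsPrime] {i : ι} (hi : P i = M) :
    idealAtPrime M I = idealAtPrime M M ^ e i := by
  subst hi
  rw [hstar.stableOp_idealExt_eq_iff.1 h.stableOp_eq _ (h.quasiStarMaximal i)]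
  exact idealAtPrime_prod_pow_eq e i fun j hj =>
    h.injective ((h.quasiStarMaximal j).eq_of_le (h.quasiStarMaximal i) hj)

theorem le (i : ι) : I ≤ P i := by
  have := (h.quasiStarMaximal i).isPrime hstar.finTypeOp
  by_contra hI
  have hpow := h.idealAtPrime_eq hstar (rfl : P i = P i)
  rw [idealAtPrime_eq_top_iff.2 hI] at hpow
  refine idealAtPrime_eq_top_iff.1 (top_le_iff.1 (hpow.le.trans ?_)) le_rfl
  exact Ideal.pow_le_self (Nat.one_le_iff_ne_zero.1 (h.one_le i))

theorem range_eq : Set.range P = {M | QuasiStarMaximal (finTypeOp star) M ∧ I ≤ M} := by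
  refine Set.Subset.antisymm ?_ fun M ⟨hM, hIM⟩ => ?_
  · rintro _ ⟨i, rfl⟩
    exact ⟨h.quasiStarMaximal i, h.le hstar i⟩
  · obtain ⟨i, hi⟩ := (h.isStarFactorization hstar).exists_le hstar hM hIM
    exact ⟨i, (h.quasiStarMaximal i).eq_of_le hM hi⟩

end IsReducedStarFactorization

variable [IsDomain D]

namespace HasStarFactorizations

variable (h : HasStarFactorizations star) (hstar : IsSemistarOperation star)

include h hstar

theorem starADD : StarADD star := by
  intro M _ hM
  have hpow : NonzeroIdealsArePrimePowers (Localization.AtPrime M) := by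
    intro J hJ
    have hmap : idealAtPrime M (J.under D) = J := IsLocalization.map_under M.primeCompl _ J
    obtain ⟨n, P, e, hPe⟩ := h (J.under D) fun hbot => hJ (hmap ▸ hbot ▸ Ideal.map_bot)
    rw [← hmap]
    exact hPe.exists_isPrime_idealAtPrime_eq_pow hstar hM
  exact ⟨inferInstance, hpow.isDiscreteValuationRing (not_isField_localization_atPrime hM.ne_bot)⟩

theorem starFiniteCharacter : StarFiniteCharacter star := by
  intro d hd
  obtain ⟨n, P, e, hPe⟩ := h (Ideal.span {d}) (by simpa using hd)
  refine (Set.finite_range P).subset fun M ⟨hM, hdM⟩ => ?_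
  obtain ⟨i, hi⟩ := hPe.exists_le hstar hM ((Ideal.span_singleton_le_iff_mem _).2 hdM)
  exact ⟨i, (h.starADD hstar).eq_of_isPrime_of_le hstar hM (hPe.1 i).1 (hPe.1 i).2.1 hi⟩

end HasStarFactorizations

theorem StarADD.exists_isReducedStarFactorization (hadd : StarADD star)
    (hfin : StarFiniteCharacter star) (hstar : IsSemistarOperation star) (hI : I ≠ ⊥) :
    ∃ (n : ℕ) (P : Fin n → Ideal D) (e : Fin n → ℕ), IsReducedStarFactorization star I P e := by
  obtain ⟨n, P, hinj, hrange⟩ := (hfin.finite_setOf_le hI).fin_param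
  have hP (i : Fin n) : QuasiStarMaximal (finTypeOp star) (P i) ∧ I ≤ P i :=
    hrange.subset ⟨i, rfl⟩
  have hexp (i : Fin n) :
      ∃ k, 1 ≤ k ∧ ∀ [(P i).IsPrime], idealAtPrime (P i) I = idealAtPrime (P i) (P i) ^ k := by
    have := (hP i).1.isPrime hstar.finTypeOp
    have := hadd.isDiscreteValuationRing (hP i).1
    obtain ⟨k, hk, hpow⟩ := exists_idealAtPrime_eq_pow hI (hP i).2
    exact ⟨k, hk, hpow⟩
  choose e he hpow using hexp
  refine ⟨n, P, e, fun i => (hP i).1, hinj, he, hstar.stableOp_idealExt_eq_iff.2 fun M _ hM => ?_⟩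
  by_cases hIM : I ≤ M
  · obtain ⟨i, rfl⟩ := hrange.superset ⟨hM, hIM⟩
    rw [hpow i, idealAtPrime_prod_pow_eq e i fun j hj => hinj ((hP j).1.eq_of_le hM hj)]
  · rw [idealAtPrime_eq_top_iff.2 hIM,
      idealAtPrime_prod_pow_eq_top e fun i hi => hIM ((hP i).2.trans hi)]

theorem IsReducedStarFactorization.exists_equiv {κ : Type*} [Fintype κ] {Q : κ → Ideal D}
    {f : κ → ℕ} (hadd : StarADD star) (hstar : IsSemistarOperation star)
    (hQ : IsReducedStarFactorization star I Q f) (hP : IsReducedStarFactorization star I P e) :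
    ∃ σ : κ ≃ ι, ∀ k, Q k = P (σ k) ∧ f k = e (σ k) := by
  let σ : κ ≃ ι := (Equiv.ofInjective Q hQ.injective).trans
    ((Equiv.setCongr ((hQ.range_eq hstar).trans (hP.range_eq hstar).symm)).trans
      (Equiv.ofInjective P hP.injective).symm)
  have hσ (k : κ) : P (σ k) = Q k := Equiv.apply_ofInjective_symm hP.injective _
  refine ⟨σ, fun k => ⟨(hσ k).symm, ?_⟩⟩
  have hk := hQ.quasiStarMaximal k
  have := hk.isPrime hstar.finTypeOp
  have := hadd.isDiscreteValuationRing hk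
  have hanti := Ideal.pow_right_strictAnti (idealAtPrime (Q k) (Q k))
    (idealAtPrime_ne_bot hk.ne_bot) fun htop => idealAtPrime_eq_top_iff.1 htop le_rfl
  refine hanti.injective ?_
  exact (hQ.idealAtPrime_eq hstar rfl).symm.trans (hP.idealAtPrime_eq hstar (hσ k))

theorem StarADD.isReducedStarFactorization_iff (hadd : StarADD star)
    (hstar : IsSemistarOperation star) :
    IsReducedStarFactorization star I P e ↔
      IsStarFactorization star I P e ∧
        (∀ i, stableOp star (idealExt K (P i)) ≠ stableOp star 1) ∧ ∀ i, 1 ≤ e i := by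
  refine ⟨fun h => ⟨h.isStarFactorization hstar,
    fun i => hstar.stableOp_idealExt_ne_iff.2 ⟨P i, h.quasiStarMaximal i, le_rfl⟩, h.one_le⟩,
    fun ⟨h, hproper, hpos⟩ => ?_⟩
  have hmax (i : ι) : QuasiStarMaximal (finTypeOp star) (P i) := by
    obtain ⟨M, hM, hle⟩ := hstar.stableOp_idealExt_ne_iff.1 (hproper i)
    rwa [hadd.eq_of_isPrime_of_le hstar hM (h.1 i).1 (h.1 i).2.1 hle]
  exact ⟨hmax, fun i j hij => h.eq_of_le_of_le hstar (hmax i) le_rfl hij.ge, hpos, h.2.2⟩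

theorem hasStarFactorizations_iff (hstar : IsSemistarOperation star) :
    HasStarFactorizations star ↔ StarADD star ∧ StarFiniteCharacter star := by
  refine ⟨fun h => ⟨h.starADD hstar, h.starFiniteCharacter hstar⟩, fun ⟨hadd, hfin⟩ I hI => ?_⟩
  obtain ⟨n, P, e, hPe⟩ := hadd.exists_isReducedStarFactorization hfin hstar hI
  exact ⟨n, P, e, hPe.isStarFactorization hstar⟩

end Factorization

section Statement

variable {D : Type*} [CommRing D] [IsDomain D]
variable {K : Type*} [Field K] [Algebra D K] [IsFractionRing D K]

/-- `D` an integral domain, `⋆` a semistar operation. `D` is a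
⋆-Dedekind domain iff every nonzero ideal `I` of `D` satisfies
`I^⋆̃ = (P₁^{e₁} ⋯ P_n^{e_n})^⋆̃` for some pairwise ⋆_f-comaximal quasi-⋆_f-prime ideals
`P_i` and nonnegative integers `e_i`. Moreover, if this factorization property holds and
`I^⋆̃ ≠ D^⋆̃`, one may take all `P_i^⋆̃ ≠ D^⋆̃` and all `e_i ≥ 1`, and then the
factorization is unique (up to permutation). -/
theorem starDedekind_iff_factorization_into_primes
    (star : Submodule D K → Submodule D K) (hstar : IsSemistarOperation star) :
    (StarDedekind star ↔
      ∀ I : Ideal D, I ≠ ⊥ →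
        ∃ (n : ℕ) (P : Fin n → Ideal D) (e : Fin n → ℕ),
          (∀ i, QuasiStarPrime (finTypeOp star) (P i)) ∧
          (∀ i j, i ≠ j →
            finTypeOp star (idealExt K (P i + P j)) = finTypeOp star (1 : Submodule D K)) ∧
          stableOp star (idealExt K I) = stableOp star (idealExt K (∏ i, P i ^ e i))) ∧
    ((∀ I : Ideal D, I ≠ ⊥ →
        ∃ (n : ℕ) (P : Fin n → Ideal D) (e : Fin n → ℕ),
          (∀ i, QuasiStarPrime (finTypeOp star) (P i)) ∧
          (∀ i j, i ≠ j →
            finTypeOp star (idealExt K (P i + P j)) = finTypeOp star (1 : Submodule D K)) ∧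
          stableOp star (idealExt K I) = stableOp star (idealExt K (∏ i, P i ^ e i))) →
      ∀ I : Ideal D, I ≠ ⊥ →
        stableOp star (idealExt K I) ≠ stableOp star (1 : Submodule D K) →
        ∃ (n : ℕ) (P : Fin n → Ideal D) (e : Fin n → ℕ),
          (∀ i, QuasiStarPrime (finTypeOp star) (P i)) ∧
          (∀ i j, i ≠ j →
            finTypeOp star (idealExt K (P i + P j)) = finTypeOp star (1 : Submodule D K)) ∧
          (∀ i, stableOp star (idealExt K (P i)) ≠ stableOp star (1 : Submodule D K)) ∧
          (∀ i, 1 ≤ e i) ∧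
          stableOp star (idealExt K I) = stableOp star (idealExt K (∏ i, P i ^ e i)) ∧
          (∀ (m : ℕ) (Q : Fin m → Ideal D) (f : Fin m → ℕ),
            (∀ i, QuasiStarPrime (finTypeOp star) (Q i)) →
            (∀ i j, i ≠ j →
              finTypeOp star (idealExt K (Q i + Q j)) = finTypeOp star (1 : Submodule D K)) →
            (∀ i, stableOp star (idealExt K (Q i)) ≠ stableOp star (1 : Submodule D K)) →
            (∀ i, 1 ≤ f i) →
            stableOp star (idealExt K I) = stableOp star (idealExt K (∏ i, Q i ^ f i)) →
            ∃ σ : Fin m ≃ Fin n, ∀ i, Q i = P (σ i) ∧ f i = e (σ i))) := by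
  have hfactor := hasStarFactorizations_iff hstar
  refine ⟨(starDedekind_iff hstar).trans hfactor.symm, fun h I hI _ => ?_⟩
  obtain ⟨hadd, hfin⟩ := hfactor.1 h
  obtain ⟨n, P, e, hPe⟩ := hadd.exists_isReducedStarFactorization hfin hstar hI
  obtain ⟨⟨hprime, hcomax, hstable⟩, hproper, hpos⟩ :=
    (hadd.isReducedStarFactorization_iff hstar).1 hPe
  refine ⟨n, P, e, hprime, hcomax, hproper, hpos, hstable, ?_⟩
  intro m Q f hQprime hQcomax hQproper hQpos hQstable
  have hQf : IsReducedStarFactorization star I Q f :=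
    (hadd.isReducedStarFactorization_iff hstar).2
      ⟨⟨hQprime, hQcomax, hQstable⟩, hQproper, hQpos⟩
  exact hQf.exists_equiv hadd hstar hPe

end Statement
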